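/- arXiv:1902.08387 — 2 statements merged into one kernel-verified Lean document; each statement's English description precedes it below -/
import Mathlib

section
/- The sequence ω defined by ω_i = k_i mod 2, where k_i is the largest integer such that 2^{k_i} divides i, is the unique fixed point of the map induced by ζ on {0,1}^ℕ; that is, ζ(ω) = ω, and any x ∈ {0,1}^ℕ with ζ(x) = x equals ω. -/
/-!
A sequence `x` is fixed by `ζ` exactly when, in 0-based indexing, `x (2m) = 0` and
`x (2m+1) = 1 - x m` (the latter for letters in `{0,1}`). The period-doubling sequence satisfies
this recursion because odd numbers have 2-adic valuation `0` (`pd_odd`) and doubling raises the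
valuation by one, hence flips its parity (`pd_two_mul`). Conversely the recursion determines every
term: the value at `n` is either forced to be `0` or depends only on the value at `n / 2 < n`, so
two fixed points agree by strong induction.
-/

open Filter Topology

/-- The period-doubling sequence (1-based): `pd i = k_i mod 2` where `k_i` is the
largest `k` such that `2^k` divides `i`. -/
def pd (i : ℕ) : ℕ := padicValNat 2 i % 2

/-- The `m`-word `w_i^(m) = ω_i ω_{i+1} ⋯ ω_{i+m-1}` of the period-doubling sequence. -/
def wordAt (i m : ℕ) : List ℕ := (List.range m).map (fun h => pd (i + h))

/-- An `m`-word is allowed if it occurs in the period-doubling sequence. -/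
def Allowed (m : ℕ) (v : List ℕ) : Prop := ∃ i, 1 ≤ i ∧ wordAt i m = v

/-- The complexity function of the period-doubling sequence. -/
noncomputable def pdComplexity (m : ℕ) : ℕ := Set.ncard {v | Allowed m v}

/-- `HasFreq m v c`: the frequency of the `m`-word `v` in the period-doubling
sequence exists and equals `c`. -/
def HasFreq (m : ℕ) (v : List ℕ) (c : ℝ) : Prop :=
  Tendsto (fun n : ℕ => (((Finset.Icc 1 n).filter (fun i => wordAt i m = v)).card : ℝ) / n)
    atTop (𝓝 c)

open Classical in
/-- The correlation sum `C(ω, n, m)` of the period-doubling sequence, for a distance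
threshold `ε` with `2^{-m} ≤ ε < 2^{-m+1}`. -/
noncomputable def corrSum (n m : ℕ) : ℝ :=
  (((Finset.range n ×ˢ Finset.range n).filter
      (fun p : ℕ × ℕ => ∀ h ∈ Finset.Icc 1 m, pd (p.1 + h) = pd (p.2 + h))).card : ℝ) / (n : ℝ) ^ 2

/-- The period-doubling substitution `ζ(0) = 01`, `ζ(1) = 00`, extended to a morphism
on finite words. -/
def substWord (w : List ℕ) : List ℕ := (w.map (fun a => if a = 0 then [0, 1] else [0, 0])).flatten

/-- The period-doubling substitution acting on one-sided infinite sequences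
(0-based indexing). -/
def substSeq (x : ℕ → ℕ) : ℕ → ℕ := fun n =>
  if n % 2 = 0 then 0 else if x (n / 2) = 0 then 1 else 0

lemma pd_odd (m : ℕ) : pd (2 * m + 1) = 0 := by
  have h : padicValNat 2 (2 * m + 1) = 0 := padicValNat.eq_zero_of_not_dvd (by omega)
  simp [pd, h]

lemma pd_two_mul (m : ℕ) (hm : m ≠ 0) : pd (2 * m) = if pd m = 0 then 1 else 0 := by
  have h : padicValNat 2 (2 * m) = 1 + padicValNat 2 m := by
    rw [padicValNat.mul (by norm_num) hm, padicValNat_self]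
  unfold pd
  rw [h]
  split_ifs <;> omega

lemma substSeq_pd : substSeq (fun n => pd (n + 1)) = fun n => pd (n + 1) := by
  funext n
  rcases Nat.even_or_odd' n with ⟨m, rfl | rfl⟩
  · simp [substSeq, pd_odd]
  · have h1 : (2 * m + 1) / 2 = m := by omega
    have h2 : (2 * m + 1) % 2 = 1 := by omega
    have h3 : 2 * m + 1 + 1 = 2 * (m + 1) := by ring
    simp [substSeq, h1, h2, h3, pd_two_mul]

/-- The substitution has at most one fixed point, even among sequences in `ℕ`, since `substSeq`
only produces the letters `0` and `1`. -/
lemma substSeq_fixed_unique {x y : ℕ → ℕ} (hx : substSeq x = x) (hy : substSeq y = y) :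
    x = y := by
  funext n
  induction n using Nat.strong_induction_on with
  | _ n ih =>
    rw [← hx, ← hy]
    by_cases hn : n % 2 = 0
    · simp [substSeq, hn]
    · simp [substSeq, ih (n / 2) (by omega)]

theorem pd_unique_fixed_point :
    substSeq (fun n => pd (n + 1)) = (fun n => pd (n + 1)) ∧
    ∀ x : ℕ → ℕ, (∀ n, x n ≤ 1) → substSeq x = x → x = fun n => pd (n + 1) := by
  exact ⟨substSeq_pd, fun _ _ hx => substSeq_fixed_unique hx substSeq_pd⟩
end

section
/- Let m = 2^k + q with k ≥ 1 and 1 ≤ q < 2^k, and let 1 ≤ i < j ≤ 3·2^k. Then w_i^(m) = w_j^(m) if and only if exactly one of the following conditions holds: (1) 1 ≤ i ≤ 2^k − q and j = i + 2^{k+1}; (2) q < 2^{k−1}, 2^k + 1 ≤ i ≤ 3·2^{k−1} − q, and j = i + 2^{k−1}. Consequently, for every 1 ≤ i < 3·2^k there is at most one j with i < j ≤ 3·2^k and w_i^(m) = w_j^(m). -/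
/-!
Two words agree iff `pd n = pd (n + d)` for all `n` in the window `[i, i + m)`, where `d = j - i`.
Write `d = 2 ^ a * d'` with `d'` odd. If `2 ^ a ∤ n`, then `n` and `n + d` have the same 2-adic
valuation (`pd_add_of_not_dvd`), so only the multiples `n = 2 ^ a * t` matter, and for these the
condition is `pd t = pd (t + d')` (`pd_two_pow_mul_eq_iff`). It fails as soon as `t` or `t + d'` is
`2` modulo `4`, because then one of the two symbols is `1` while the other, at an odd index, is `0`
(`pd_ne_of_left`, `pd_ne_of_right`).

If `a + 2 ≤ k`, the window is longer than `4 * 2 ^ a` and contains a `2 ^ a * t` with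
`t % 4 = 2`. Since `d < 3 * 2 ^ k`, the remaining cases are `a = k - 1` with `d' ∈ {1, 3, 5}`, and
`a ∈ {k, k + 1}` with `d' = 1`. In each of them, avoiding the bad multiples of `2 ^ a` either is
impossible or confines `i` to the range in (1) (for `a = k + 1`) or (2)
(for `a = k - 1`, `d' = 1`). Conversely, in (1) the window contains no multiple of `2 ^ (k + 1)`,
and in (2) it contains no multiples of `2 ^ (k - 1)` except `t = 3` and `t = 4`, where
`pd 3 = pd 4 = pd 5`.
-/


open Filter Topology

lemma pd_of_odd {n : ℕ} (h : n % 2 = 1) : pd n = 0 := by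
  unfold pd
  rw [padicValNat.eq_zero_of_not_dvd (by omega)]

lemma pd_two_mul_s11 {n : ℕ} (h : 0 < n) : pd (2 * n) = 1 - pd n := by
  unfold pd
  rw [padicValNat.mul (by norm_num) h.ne', padicValNat.self (by norm_num)]
  omega

lemma pd_le_one (n : ℕ) : pd n ≤ 1 := by
  unfold pd
  omega

lemma pd_of_mod_four {n : ℕ} (h : n % 4 = 2) : pd n = 1 := by
  obtain ⟨s, rfl⟩ : ∃ s, n = 2 * s := ⟨n / 2, by omega⟩
  rw [pd_two_mul_s11 (by omega), pd_of_odd (by omega)]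

lemma pd_two_pow_mul_eq_iff (a : ℕ) {s t : ℕ} (hs : 0 < s) (ht : 0 < t) :
    pd (2 ^ a * s) = pd (2 ^ a * t) ↔ pd s = pd t := by
  induction a with
  | zero => simp
  | succ a ih =>
    rw [← ih, pow_succ', mul_assoc, mul_assoc, pd_two_mul_s11 (by positivity),
      pd_two_mul_s11 (by positivity)]
    have h1 := pd_le_one (2 ^ a * s)
    have h2 := pd_le_one (2 ^ a * t)
    omega

lemma pd_add_of_not_dvd (a c : ℕ) {n : ℕ} (h : ¬ 2 ^ a ∣ n) : pd n = pd (n + 2 ^ a * c) := by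
  induction a generalizing n with
  | zero => simp at h
  | succ a ih =>
    rw [pow_succ', mul_assoc]
    rcases Nat.mod_two_eq_zero_or_one n with hn | hn
    · obtain ⟨s, rfl⟩ : ∃ s, n = 2 * s := ⟨n / 2, by omega⟩
      have hs : ¬ 2 ^ a ∣ s := fun hd => h (by rw [pow_succ']; exact Nat.mul_dvd_mul_left 2 hd)
      have hs0 : 0 < s := Nat.pos_of_ne_zero (by rintro rfl; simp at hs)
      rw [← mul_add, pd_two_mul_s11 hs0, pd_two_mul_s11 (by omega), ih hs]
    · rw [pd_of_odd hn, pd_of_odd (by omega)]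

lemma pd_ne_of_left (a : ℕ) {t d : ℕ} (ht : t % 4 = 2) (hd : d % 2 = 1) :
    pd (2 ^ a * t) ≠ pd (2 ^ a * t + 2 ^ a * d) := by
  rw [← mul_add, Ne, pd_two_pow_mul_eq_iff a (by omega) (by omega), pd_of_mod_four ht,
    pd_of_odd (by omega)]
  norm_num

lemma pd_ne_of_right (a : ℕ) {t d : ℕ} (ht : (t + d) % 4 = 2) (hd : d % 2 = 1) :
    pd (2 ^ a * t) ≠ pd (2 ^ a * t + 2 ^ a * d) := by
  rw [← mul_add, Ne, pd_two_pow_mul_eq_iff a (by omega) (by omega), pd_of_mod_four ht,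
    pd_of_odd (by omega)]
  norm_num

lemma wordAt_eq_iff (i d m : ℕ) :
    wordAt i m = wordAt (i + d) m ↔ ∀ n, i ≤ n → n < i + m → pd n = pd (n + d) := by
  unfold wordAt
  rw [List.map_inj_left]
  constructor
  · intro h n h1 h2
    have := h (n - i) (List.mem_range.2 (by omega))
    rwa [show i + (n - i) = n by omega, show i + d + (n - i) = n + d by omega] at this
  · intro h e he
    have := h (i + e) (by omega) (by have := List.mem_range.1 he; omega)
    rwa [show i + e + d = i + d + e by omega] at this

/-- Equal words force one of the two alternatives. -/
lemma cases_of_wordAt_eq {m k q i j : ℕ} (hk : 1 ≤ k) (hq1 : 1 ≤ q)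
    (hm : m = 2 ^ k + q) (hi : 1 ≤ i) (hij : i < j) (hj : j ≤ 3 * 2 ^ k)
    (h : wordAt i m = wordAt j m) :
    (1 ≤ i ∧ i ≤ 2 ^ k - q ∧ j = i + 2 ^ (k + 1)) ∨
      (q < 2 ^ (k - 1) ∧ 2 ^ k + 1 ≤ i ∧ i ≤ 3 * 2 ^ (k - 1) - q ∧ j = i + 2 ^ (k - 1)) := by
  obtain ⟨a, d, hd, had⟩ := Nat.exists_eq_two_pow_mul_odd (n := j - i) (by omega)
  rw [Nat.odd_iff] at hd
  obtain rfl : j = i + 2 ^ a * d := by omega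
  rw [wordAt_eq_iff] at h
  have hP : 0 < 2 ^ a := by positivity
  -- The two ways in which a multiple of `2 ^ a` in the window separates the words.
  have hl : ∀ t, t % 4 = 2 → ¬ (i ≤ 2 ^ a * t ∧ 2 ^ a * t < i + m) := fun t ht hw =>
    pd_ne_of_left a ht hd (h _ hw.1 hw.2)
  have hr : ∀ t, (t + d) % 4 = 2 → ¬ (i ≤ 2 ^ a * t ∧ 2 ^ a * t < i + m) := fun t ht hw =>
    pd_ne_of_right a ht hd (h _ hw.1 hw.2)
  obtain hlt | hge := Nat.lt_or_ge (a + 1) k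
  · exfalso
    have hpow : 4 * 2 ^ a ≤ 2 ^ k := by
      calc 4 * 2 ^ a = 2 ^ (a + 2) := by ring
        _ ≤ _ := Nat.pow_le_pow_right (by norm_num) (by omega)
    generalize 2 ^ a = P at *
    -- `P * (4 * s + 2)` is the first multiple of `P` of this form that is at least `i`.
    set s := (i + 2 * P - 1) / (4 * P) with hs
    have h1 := Nat.div_add_mod (i + 2 * P - 1) (4 * P)
    have h2 := Nat.mod_lt (i + 2 * P - 1) (show 0 < 4 * P by omega)
    rw [← hs] at h1
    have h3 : P * (4 * s + 2) = 4 * P * s + 2 * P := by ring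
    refine hl (4 * s + 2) (by omega) ?_
    rw [h3]
    omega
  have hak : k = a + 1 ∨ k = a ∨ a = k + 1 ∨ k + 2 ≤ a := by omega
  rcases hak with rfl | rfl | rfl | hbig
  · simp only [Nat.add_sub_cancel]
    rw [pow_succ] at *
    generalize 2 ^ a = P at *
    have hd6 : d < 6 := by
      by_contra hc
      have := Nat.mul_le_mul_left P (show 6 ≤ d by omega)
      omega
    have h2 := hl 2 rfl
    have : d = 1 ∨ d = 3 ∨ d = 5 := by omega
    rcases this with rfl | rfl | rfl
    · have h1 := hr 1 rfl
      have h5 := hr 5 rfl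
      omega
    · have h3 := hr 3 rfl
      omega
    · omega
  · exfalso
    have h2 := hl 2 rfl
    generalize 2 ^ k = P at *
    have hd3 : d < 3 := by
      by_contra hc
      have := Nat.mul_le_mul_left P (show 3 ≤ d by omega)
      omega
    obtain rfl : d = 1 := by omega
    have h1 := hr 1 rfl
    omega
  · left
    have hk1 : 2 ^ (k + 1) = 2 ^ k * 2 := pow_succ 2 k
    rw [hk1] at hl hr hj ⊢
    clear h had hij hP hk1
    generalize 2 ^ k = P at *
    have hd3 : d < 2 := by
      by_contra hc
      have := Nat.mul_le_mul_left (P * 2) (show 2 ≤ d by omega)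
      omega
    obtain rfl : d = 1 := by omega
    have h1 := hr 1 rfl
    omega
  · exfalso
    have hpow : 4 * 2 ^ k ≤ 2 ^ a := by
      calc 4 * 2 ^ k = 2 ^ (k + 2) := by ring
        _ ≤ _ := Nat.pow_le_pow_right (by norm_num) hbig
    have := Nat.mul_le_mul_left (2 ^ a) (show 1 ≤ d by omega)
    omega

lemma wordAt_eq_of_first {m k q i : ℕ} (hm : m = 2 ^ k + q) (hi : 1 ≤ i)
    (h : i ≤ 2 ^ k - q) : wordAt i m = wordAt (i + 2 ^ (k + 1)) m := by
  rw [wordAt_eq_iff]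
  intro n h1 h2
  have := pd_add_of_not_dvd (k + 1) 1 (n := n) (fun hd => by
    have := Nat.le_of_dvd (by omega) hd
    rw [pow_succ] at this
    omega)
  rwa [mul_one] at this

lemma wordAt_eq_of_second {m a q i : ℕ} (hm : m = 2 ^ (a + 1) + q)
    (hq : q < 2 ^ a) (hi : 2 ^ (a + 1) + 1 ≤ i) (h : i ≤ 3 * 2 ^ a - q) :
    wordAt i m = wordAt (i + 2 ^ a) m := by
  rw [wordAt_eq_iff]
  intro n h1 h2
  by_cases hd : 2 ^ a ∣ n
  · obtain ⟨t, rfl⟩ := hd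
    rw [pow_succ] at *
    have ht : t = 3 ∨ t = 4 := by
      have h3 : 2 < t := Nat.lt_of_mul_lt_mul_left (a := 2 ^ a) (by omega)
      have h5 : t < 5 := Nat.lt_of_mul_lt_mul_left (a := 2 ^ a) (by omega)
      omega
    have h4 : pd 4 = 0 := by
      rw [show 4 = 2 * 2 from rfl, pd_two_mul_s11 (by norm_num), pd_of_mod_four rfl]
    rw [← mul_add_one, pd_two_pow_mul_eq_iff a (by omega) (by omega)]
    rcases ht with rfl | rfl
    · exact (pd_of_odd rfl).trans h4.symm
    · exact h4.trans (pd_of_odd rfl).symm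
  · simpa using pd_add_of_not_dvd a 1 hd

theorem pd_word_equality_characterization (m k q : ℕ) (hk : 1 ≤ k) (hq1 : 1 ≤ q)
    (hq2 : q < 2 ^ k) (hm : m = 2 ^ k + q) :
    (∀ i j, 1 ≤ i → i < j → j ≤ 3 * 2 ^ k →
      (wordAt i m = wordAt j m ↔
        Xor' (1 ≤ i ∧ i ≤ 2 ^ k - q ∧ j = i + 2 ^ (k + 1))
          (q < 2 ^ (k - 1) ∧ 2 ^ k + 1 ≤ i ∧ i ≤ 3 * 2 ^ (k - 1) - q ∧
            j = i + 2 ^ (k - 1)))) ∧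
    (∀ i j j', 1 ≤ i → i < j → j ≤ 3 * 2 ^ k → i < j' → j' ≤ 3 * 2 ^ k →
      wordAt i m = wordAt j m → wordAt i m = wordAt j' m → j = j') := by
  constructor
  · intro i j hi hij hj
    constructor
    · intro h
      rcases cases_of_wordAt_eq hk hq1 hm hi hij hj h with h1 | h2
      · exact Or.inl ⟨h1, by omega⟩
      · exact Or.inr ⟨h2, by omega⟩
    · rintro (⟨⟨h1, h2, rfl⟩, -⟩ | ⟨⟨h1, h2, h3, rfl⟩, -⟩)
      · exact wordAt_eq_of_first hm h1 h2
      · obtain ⟨a, rfl⟩ : ∃ a, k = a + 1 := ⟨k - 1, by omega⟩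
        exact wordAt_eq_of_second hm h1 h2 h3
  · intro i j j' hi hij hj hij' hj' h h'
    have h1 := cases_of_wordAt_eq hk hq1 hm hi hij hj h
    have h2 := cases_of_wordAt_eq hk hq1 hm hi hij' hj' h'
    omega
end
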